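/- Consider the 6×7 block matrix 𝒪 with block rows (A₁, A₂, 0, 0), (−M, 0, v, 0), (c·v·wᵀ, J'v·ω̄ₛ placed as zero 2×2 block, J v·ω̄ₛ, d·v) where A₂ and M are invertible 2×2 matrices, v ∈ ℝ² nonzero, d ≠ 0, and J v·ω̄ₛ is not parallel to v. Then 𝒪 has full row rank 6. -/

import Mathlib

/-!
Apart from their common zero block, the last two block rows form the matrix `[-M B; C D]`, where the
columns of `D` are `u` and `d • v`, and `B` is supported on its first column. The columns of `C` are
multiples of `v`, hence of the second column of `D`, so `C = D * K` with `K` supported on its second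
row, and `B * K = 0`. Therefore `[-M B; D * K D] = [-M B; 0 D] * [1 0; K 1]` is invertible.
Together with the invertible block `A₂`, whose block column is otherwise zero, this gives full rank.
-/

open Matrix

section BlockMatrices

variable {R m n : Type*} [CommRing R] [Fintype m] [Fintype n] [DecidableEq m] [DecidableEq n]

theorem isUnit_fromBlocks_mul_of_mul_eq_zero {M : Matrix m m R} {B : Matrix m n R}
    {D : Matrix n n R} {K : Matrix n m R} (hBK : B * K = 0) :
    IsUnit (fromBlocks M B (D * K) D) ↔ IsUnit M ∧ IsUnit D := by
  have hfactor : fromBlocks M B (D * K) D = fromBlocks M B 0 D * fromBlocks 1 0 K 1 := by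
    simp [fromBlocks_multiply, hBK]
  have hK : IsUnit (fromBlocks (1 : Matrix m m R) 0 K 1) :=
    isUnit_fromBlocks_zero₁₂.mpr ⟨isUnit_one, isUnit_one⟩
  rw [hfactor, hK.mul_right_iff, isUnit_fromBlocks_zero₂₁]

theorem isUnit_fromBlocks_vecMulVec_single_vecMulVec_col {M : Matrix m m R} {D : Matrix n n R}
    {i j : n} (hij : i ≠ j) (b w : m → R) :
    IsUnit (fromBlocks M (vecMulVec b (Pi.single i 1)) (vecMulVec (D.col j) w) D) ↔
      IsUnit M ∧ IsUnit D := by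
  rw [← mulVec_single_one, ← mul_vecMulVec]
  apply isUnit_fromBlocks_mul_of_mul_eq_zero
  simp [vecMulVec_mul_vecMulVec, hij]

end BlockMatrices

section Observability

variable {R l m : Type*} [CommRing R]

/-- The observability matrix with block rows `(A₁, A₂, 0, 0)`, `(-M, 0, b, 0)` and
`((c • v) wᵀ, 0, u, d • v)`. The last two block columns have width one and are indexed together by
`Fin 2`, so `(of ![u, d • v])ᵀ` is the matrix with columns `u` and `d • v`. -/
def observabilityMatrix (A₁ : Matrix l m R) (A₂ : Matrix l l R) (M : Matrix m m R)
    (b w : m → R) (u v : Fin 2 → R) (c d : R) : Matrix ((l ⊕ m) ⊕ Fin 2) ((m ⊕ l) ⊕ Fin 2) R :=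
  fromRows
    (fromRows
      (fromCols (fromCols A₁ A₂) 0)
      (fromCols (fromCols (-M) 0) (of ![b, 0])ᵀ))
    (fromCols (fromCols (vecMulVec (c • v) w) 0) (of ![u, d • v])ᵀ)

theorem observabilityMatrix_submatrix_swap_cols (A₁ : Matrix l m R) (A₂ : Matrix l l R)
    (M : Matrix m m R) (b w : m → R) (u v : Fin 2 → R) (c d : R) :
    (observabilityMatrix A₁ A₂ M b w u v c d).submatrix (Equiv.sumAssoc l m (Fin 2)).symm
        ((Equiv.sumAssoc l m (Fin 2)).symm.trans ((Equiv.sumComm l m).sumCongr (Equiv.refl _))) =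
      fromBlocks A₂ (fromCols A₁ 0) 0
        (fromBlocks (-M) (of ![b, 0])ᵀ (vecMulVec (c • v) w) (of ![u, d • v])ᵀ) := by
  ext (i | i | i) (j | j | j) <;> rfl

theorem rank_observabilityMatrix_fin_two (A₁ A₂ M : Matrix (Fin 2) (Fin 2) R)
    (b w u v : Fin 2 → R) (c d : R) :
    (observabilityMatrix A₁ A₂ M b w u v c d).rank = (of
      ![![A₁ 0 0, A₁ 0 1, A₂ 0 0, A₂ 0 1, 0, 0],
        ![A₁ 1 0, A₁ 1 1, A₂ 1 0, A₂ 1 1, 0, 0],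
        ![-M 0 0, -M 0 1, 0, 0, b 0, 0],
        ![-M 1 0, -M 1 1, 0, 0, b 1, 0],
        ![c * v 0 * w 0, c * v 0 * w 1, 0, 0, u 0, d * v 0],
        ![c * v 1 * w 0, c * v 1 * w 1, 0, 0, u 1, d * v 1]]).rank := by
  let e : (Fin 2 ⊕ Fin 2) ⊕ Fin 2 ≃ Fin 6 :=
    (finSumFinEquiv.sumCongr (Equiv.refl _)).trans finSumFinEquiv
  rw [← rank_submatrix _ e e]
  congr 1
  ext ((i | i) | i) ((j | j) | j) <;> fin_cases i <;> fin_cases j <;> rfl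

theorem stmt_14_general {K : Type*} [Field K] [Fintype l] [Fintype m] [DecidableEq l]
    [DecidableEq m] (A₁ : Matrix l m K) {A₂ : Matrix l l K} {M : Matrix m m K}
    (hA₂ : IsUnit A₂) (hM : IsUnit M) (b w : m → K) {u v : Fin 2 → K} (c : K) {d : K}
    (hd : d ≠ 0) (huv : LinearIndependent K ![u, v]) :
    (observabilityMatrix A₁ A₂ M b w u v c d).rank = Fintype.card l + Fintype.card m + 2 := by
  let D : Matrix (Fin 2) (Fin 2) K := (of ![u, d • v])ᵀ
  have hcol : D.col = ![u, d • v] := rfl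
  have hD : IsUnit D := by
    rw [← linearIndependent_cols_iff_isUnit, hcol]
    simpa only [one_smul] using
      (LinearIndependent.pair_smul_smul_iff isUnit_one hd.isUnit).mpr huv
  have hB : (of ![b, 0])ᵀ = vecMulVec b (Pi.single (0 : Fin 2) 1) := by
    ext i j
    fin_cases j <;> simp [vecMulVec_apply]
  have hC : vecMulVec (c • v) w = vecMulVec (D.col 1) ((c / d) • w) := by
    rw [hcol, cons_val_one, cons_val_zero, vecMulVec_smul, ← smul_vecMulVec, smul_smul,
      div_mul_cancel₀ c hd]
  have hunit : IsUnit (fromBlocks A₂ (fromCols A₁ 0) 0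
      (fromBlocks (-M) (of ![b, 0])ᵀ (vecMulVec (c • v) w) D)) := by
    rw [hB, hC, isUnit_fromBlocks_zero₂₁,
      isUnit_fromBlocks_vecMulVec_single_vecMulVec_col zero_ne_one]
    exact ⟨hA₂, hM.neg, hD⟩
  rw [← observabilityMatrix_submatrix_swap_cols] at hunit
  simpa only [rank_submatrix, Fintype.card_sum, Fintype.card_fin, add_assoc] using
    rank_of_isUnit _ hunit

end Observability

theorem stmt_14
    (J : Matrix (Fin 2) (Fin 2) ℝ) (hJ : J = !![0, -1; 1, 0])
    (A1 A2 M : Matrix (Fin 2) (Fin 2) ℝ)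
    (hA2 : IsUnit A2) (hM : IsUnit M)
    (v w : Fin 2 → ℝ) (hv : v ≠ 0)
    (c d : ℝ) (hd : d ≠ 0)
    (ws : ℝ)
    (hind : LinearIndependent ℝ ![ws • J.mulVec v, v])
    (O : Matrix (Fin 6) (Fin 6) ℝ)
    (hO : O = Matrix.of
      ![![A1 0 0, A1 0 1, A2 0 0, A2 0 1, 0, 0],
        ![A1 1 0, A1 1 1, A2 1 0, A2 1 1, 0, 0],
        ![-M 0 0, -M 0 1, 0, 0, v 0, 0],
        ![-M 1 0, -M 1 1, 0, 0, v 1, 0],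
        ![c * v 0 * w 0, c * v 0 * w 1, 0, 0, (J.mulVec v 0) * ws, d * v 0],
        ![c * v 1 * w 0, c * v 1 * w 1, 0, 0, (J.mulVec v 1) * ws, d * v 1]]) :
    O.rank = 6 := by
  simpa only [rank_observabilityMatrix_fin_two, Pi.smul_apply, smul_eq_mul, mul_comm ws, ← hO,
    Fintype.card_fin] using stmt_14_general A1 hA2 hM v w c hd hind
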